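/- On ℝ^4 with coordinates (x_1, x_2, x_3, x_4), consider the ℝ²-valued one-form η_fw = η^1 ⊗ e_1 + η^2 ⊗ e_2 with η^1 = x_1 dx_2 − dx_3 and η^2 = −(x_1²/2) dx_2 + dx_4. Then η_fw is a two-contact form on ℝ^4: for every x ∈ ℝ^4, (a) ker(η_fw)_x := {v ∈ ℝ^4 : η^1_x(v) = η^2_x(v) = 0} is two-dimensional, spanned by (1,0,0,0) and (0,1,x_1,x_1²/2); (b) the joint kernel {v ∈ ℝ^4 : dη^1_x(v,·) = 0 and dη^2_x(v,·) = 0} equals span{(0,0,1,0),(0,0,0,1)}; (c) ker(η_fw)_x ∩ ker(dη_fw)_x = 0. (This is the two-contact form compatible with the Lie system of the front-wheel driven kinematic car.) -/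

import Mathlib

/-- Exterior derivative of a one-form: `dθ_x(u, v) = Dθ(x)(u)(v) − Dθ(x)(v)(u)`. -/
noncomputable def extD {E : Type*} [NormedAddCommGroup E] [NormedSpace ℝ E]
    (θ : E → (E →L[ℝ] ℝ)) (x u v : E) : ℝ :=
  fderiv ℝ θ x u v - fderiv ℝ θ x v u

/-- `η^1 = x_1 dx_2 − dx_3` on `ℝ^4` (coordinates `x_1, x_2, x_3, x_4 = x 0, …, x 3`). -/
noncomputable def etaFW1 : (Fin 4 → ℝ) → ((Fin 4 → ℝ) →L[ℝ] ℝ) :=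
  fun x => x 0 • (ContinuousLinearMap.proj 1 : (Fin 4 → ℝ) →L[ℝ] ℝ) -
    (ContinuousLinearMap.proj 2 : (Fin 4 → ℝ) →L[ℝ] ℝ)

/-- `η^2 = −(x_1²/2) dx_2 + dx_4` on `ℝ^4`. -/
noncomputable def etaFW2 : (Fin 4 → ℝ) → ((Fin 4 → ℝ) →L[ℝ] ℝ) :=
  fun x => (-(x 0 ^ 2 / 2)) • (ContinuousLinearMap.proj 1 : (Fin 4 → ℝ) →L[ℝ] ℝ) +
    (ContinuousLinearMap.proj 3 : (Fin 4 → ℝ) →L[ℝ] ℝ)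

/-!
Both components have the form `η = f • dx₂ + c` with `c` constant, hence `dη = df ∧ dx₂`. Here
`dη¹ = dx₁ ∧ dx₂`, and `dη² = -x₁ dη¹` contributes no further equation to the joint kernel, which is
therefore the plane `dx₁ = dx₂ = 0`. The kernel of `(η¹, η²)` is a graph over the
`(x₁, x₂)`-plane, so the two planes are complementary.
-/

open Module

section LinearAlgebra

theorem forall_mul_sub_mul_eq_zero_iff {R M : Type*} [CommRing R] [AddCommMonoid M] [Module R M]
    {α β : Dual R M} (hαβ : LinearIndependent R ![α, β]) {v : M} :
    (∀ u, α v * β u - α u * β v = 0) ↔ α v = 0 ∧ β v = 0 := by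
  refine ⟨fun h ↦ ?_, fun ⟨hα, hβ⟩ u ↦ by simp [hα, hβ]⟩
  have hrel : (-β v) • α + α v • β = 0 := by
    ext u
    simpa [sub_eq_neg_add, mul_comm] using h u
  obtain ⟨hβ, hα⟩ := LinearIndependent.pair_iff.mp hαβ _ _ hrel
  exact ⟨hα, neg_eq_zero.mp hβ⟩

theorem linearIndependent_proj_pair {R ι : Type*} [CommRing R] {i j : ι} (hij : i ≠ j) :
    LinearIndependent R ![(LinearMap.proj i : (ι → R) →ₗ[R] R), LinearMap.proj j] := by
  classical
  refine LinearIndependent.pair_iff.mpr fun s t h ↦ ⟨?_, ?_⟩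
  · simpa [hij] using LinearMap.congr_fun h (Pi.single i 1)
  · simpa [hij.symm] using LinearMap.congr_fun h (Pi.single j 1)

theorem mem_span_graph_pair_iff {R : Type*} [Semiring R] {a b c d : R} {v : Fin 4 → R} :
    v ∈ Submodule.span R {![1, 0, a, b], ![0, 1, c, d]} ↔
      v 2 = v 0 * a + v 1 * c ∧ v 3 = v 0 * b + v 1 * d := by
  rw [Submodule.mem_span_pair]
  constructor
  · rintro ⟨s, t, rfl⟩
    simp
  · rintro ⟨h2, h3⟩
    refine ⟨v 0, v 1, funext fun i ↦ ?_⟩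
    fin_cases i <;> simp [h2, h3]

theorem mem_span_last_two_iff {R : Type*} [Semiring R] {v : Fin 4 → R} :
    v ∈ Submodule.span R {![0, 0, 1, 0], ![0, 0, 0, 1]} ↔ v 0 = 0 ∧ v 1 = 0 := by
  rw [Submodule.mem_span_pair]
  constructor
  · rintro ⟨s, t, rfl⟩
    simp
  · rintro ⟨h0, h1⟩
    refine ⟨v 2, v 3, funext fun i ↦ ?_⟩
    fin_cases i <;> simp [h0, h1]

theorem finrank_span_graph_pair {R : Type*} [Ring R] [StrongRankCondition R] (a b c d : R) :
    finrank R (Submodule.span R {![1, 0, a, b], ![0, 1, c, d]}) = 2 := by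
  have hli : LinearIndependent R ![![1, 0, a, b], ![0, 1, c, d]] :=
    LinearIndependent.pair_iff.mpr fun s t h ↦
      ⟨by simpa using congrFun h 0, by simpa using congrFun h 1⟩
  have : Nontrivial R := nontrivial_of_invariantBasisNumber R
  rw [← Matrix.range_cons_cons_empty _ _ ![], finrank_span_eq_card hli, Fintype.card_fin]

end LinearAlgebra

theorem extD_smul_add_const {E : Type*} [NormedAddCommGroup E] [NormedSpace ℝ E]
    {f : E → ℝ} {f' : E →L[ℝ] ℝ} {x : E} (hf : HasFDerivAt f f' x) (α c : E →L[ℝ] ℝ) (u v : E) :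
    extD (fun y ↦ f y • α + c) x u v = f' u * α v - f' v * α u := by
  simp [extD, ((hf.smul_const α).add_const c).fderiv]

section FrontWheelCar

variable (x u v : Fin 4 → ℝ)

theorem etaFW1_apply : etaFW1 x v = x 0 * v 1 - v 2 := by
  simp [etaFW1]

theorem etaFW2_apply : etaFW2 x v = -(x 0 ^ 2 / 2) * v 1 + v 3 := by
  simp [etaFW2]

theorem extD_etaFW1 : extD etaFW1 x u v = u 0 * v 1 - v 0 * u 1 := by
  have hη : etaFW1 = fun y ↦ y 0 • .proj 1 + -.proj 2 := funext fun _ ↦ sub_eq_add_neg _ _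
  rw [hη]
  exact extD_smul_add_const (f := fun y ↦ y 0) (hasFDerivAt_apply 0 x) _ _ u v

theorem extD_etaFW2 : extD etaFW2 x u v = -x 0 * extD etaFW1 x u v := by
  have hf : HasFDerivAt (fun y : Fin 4 → ℝ ↦ -(y 0 ^ 2 / 2))
      (-x 0 • (.proj 0 : (Fin 4 → ℝ) →L[ℝ] ℝ)) x := by
    have hsq : HasDerivAt (fun t : ℝ ↦ -(t ^ 2 / 2)) (-x 0) (x 0) := by
      simpa using ((hasDerivAt_pow 2 (x 0)).div_const 2).fun_neg
    exact hsq.comp_hasFDerivAt (f := fun y : Fin 4 → ℝ ↦ y 0) x (hasFDerivAt_apply 0 x)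
  calc extD etaFW2 x u v = -x 0 * u 0 * v 1 - -x 0 * v 0 * u 1 :=
        extD_smul_add_const hf (.proj 1) (.proj 3) u v
    _ = -x 0 * extD etaFW1 x u v := by rw [extD_etaFW1]; ring

variable {x v}

theorem etaFW_eq_zero_iff :
    etaFW1 x v = 0 ∧ etaFW2 x v = 0 ↔ v 2 = v 1 * x 0 ∧ v 3 = v 1 * (x 0 ^ 2 / 2) := by
  rw [etaFW1_apply, etaFW2_apply]
  constructor <;> rintro ⟨h2, h3⟩ <;> constructor <;> linarith

theorem forall_extD_etaFW1_eq_zero_iff : (∀ u, extD etaFW1 x v u = 0) ↔ v 0 = 0 ∧ v 1 = 0 := by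
  simp only [extD_etaFW1]
  have hproj : LinearIndependent ℝ ![(LinearMap.proj 0 : Dual ℝ (Fin 4 → ℝ)), LinearMap.proj 1] :=
    linearIndependent_proj_pair zero_ne_one
  exact forall_mul_sub_mul_eq_zero_iff hproj

theorem forall_extD_etaFW_eq_zero_iff :
    ((∀ u, extD etaFW1 x v u = 0) ∧ ∀ u, extD etaFW2 x v u = 0) ↔ v 0 = 0 ∧ v 1 = 0 := by
  rw [← forall_extD_etaFW1_eq_zero_iff (x := x)]
  exact and_iff_left_of_imp fun h u ↦ by rw [extD_etaFW2, h, mul_zero]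

theorem eq_zero_of_etaFW_eq_zero (hη : etaFW1 x v = 0 ∧ etaFW2 x v = 0)
    (hdη : ∀ u, extD etaFW1 x v u = 0) : v = 0 := by
  obtain ⟨h0, h1⟩ := forall_extD_etaFW1_eq_zero_iff.mp hdη
  obtain ⟨h2, h3⟩ := etaFW_eq_zero_iff.mp hη
  ext i
  fin_cases i <;> simp [h0, h1, h2, h3]

end FrontWheelCar

/-- **The two-contact form of the front-wheel driven kinematic car.** The ℝ²-valued
one-form `η_fw = η^1 ⊗ e_1 + η^2 ⊗ e_2` with `η^1 = x_1 dx_2 − dx_3`,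
`η^2 = −(x_1²/2) dx_2 + dx_4` is a two-contact form on `ℝ^4`: at every point,
(a) its kernel is two-dimensional, spanned by `(1,0,0,0)` and `(0,1,x_1,x_1²/2)`;
(b) the joint kernel of `dη^1, dη^2` is `span{(0,0,1,0),(0,0,0,1)}`;
(c) the two kernels intersect trivially. -/
theorem stmt_15 : ∀ x : Fin 4 → ℝ,
    ({v : Fin 4 → ℝ | etaFW1 x v = 0 ∧ etaFW2 x v = 0} =
      ↑(Submodule.span ℝ
        ({![1, 0, 0, 0], ![0, 1, x 0, x 0 ^ 2 / 2]} : Set (Fin 4 → ℝ)))) ∧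
    Module.finrank ℝ
      ↥(Submodule.span ℝ
        ({![1, 0, 0, 0], ![0, 1, x 0, x 0 ^ 2 / 2]} : Set (Fin 4 → ℝ))) = 2 ∧
    ({v : Fin 4 → ℝ | (∀ u, extD etaFW1 x v u = 0) ∧ (∀ u, extD etaFW2 x v u = 0)} =
      ↑(Submodule.span ℝ
        ({![0, 0, 1, 0], ![0, 0, 0, 1]} : Set (Fin 4 → ℝ)))) ∧
    (∀ v : Fin 4 → ℝ, etaFW1 x v = 0 → etaFW2 x v = 0 →
      (∀ u, extD etaFW1 x v u = 0) → (∀ u, extD etaFW2 x v u = 0) → v = 0) := by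
  intro x
  refine ⟨?_, finrank_span_graph_pair 0 0 _ _, ?_, ?_⟩
  · ext v
    simpa using etaFW_eq_zero_iff.trans (by simp [mem_span_graph_pair_iff])
  · ext v
    exact forall_extD_etaFW_eq_zero_iff.trans mem_span_last_two_iff.symm
  · intro v hη₁ hη₂ hdη₁ _
    exact eq_zero_of_etaFW_eq_zero ⟨hη₁, hη₂⟩ hdη₁
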